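/- Let G be a finite simple connected graph on [n] with n ≥ 3. Then pd(I_c(G)) ∈ {1, 2}, and pd(I_c(G)) = 1 if and only if G is a tree. -/

import Mathlib

/-!
The monomial `x^b` lies in `I_c(G)` iff the zero set of `b` is contained in an edge of `G`.
Hence the degree-`a` strand of the Koszul complex is governed by two cases.

* If `a j ≥ 2` for some `j`, inserting or removing `j` does not affect membership in `I_c(G)`, so the
  strand is a cone with apex `j`, and it is exact in positive homological degrees
  (`ker_le_range_of_two_le`).
* If `a ≤ 1`, the strand is (up to a shift) the augmented chain complex of the link of the zero set
  of `a` in the one-dimensional complex `G`. In particular it vanishes in homological degrees `≥ 3`,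
  and in degree `2` unless `a = (1, …, 1)` (`card_le_of_le_one`).

For `a = (1, …, 1)` the second homology is the kernel of the boundary map from edges to vertices.
As `G` is connected this map has rank `n - 1`, so by rank-nullity its kernel vanishes iff
`|E(G)| = n - 1`, that is, iff `G` is a tree (`ker_eq_bot_iff_isTree`). The first homology is never
zero in all degrees: some vertex `v` has two neighbours, and in the degree `a` with zero set `{v}`
the difference of these two points of the link of `v` is a nontrivial class
(`nontrivial_Hmod_one`).
-/

open MvPolynomial

namespace Paper

noncomputable section

variable (K : Type) [Field K] (n : ℕ)

/-- The polynomial ring `S = K[x_1, …, x_n]`. -/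
abbrev S := MvPolynomial (Fin n) K

variable {n}

/-- The squarefree exponent vector of a subset `F ⊆ [n]`. -/
def expF (F : Finset (Fin n)) : Fin n →₀ ℕ := ∑ j ∈ F, Finsupp.single j 1

variable {K}

/-- Basis of the multidegree-`a` component of the `i`-th term of the Koszul
complex of `x_1, …, x_n` tensored with the ideal `I`:  subsets `F` of
cardinality `i` such that `x^(a - ε_F) ∈ I`. -/
abbrev KB (I : Ideal (S K n)) (a : Fin n →₀ ℕ) (i : ℕ) : Type :=
  {F : Finset (Fin n) // F.card = i ∧ expF F ≤ a ∧
    (monomial (a - expF F) (1 : K) : S K n) ∈ I}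

/-- The Koszul differential (in multidegree `a`) from homological degree
`i+1` to `i`. -/
def kd (I : Ideal (S K n)) (a : Fin n →₀ ℕ) (i : ℕ) :
    (KB I a (i + 1) →₀ K) →ₗ[K] (KB I a i →₀ K) :=
  Finsupp.lsum K fun F =>
    LinearMap.toSpanSingleton K _
      (∑ j ∈ F.1.attach,
        ((-1 : K) ^ ((F.1.filter (fun x => x < j.1)).card)) •
          Finsupp.single
            (⟨F.1.erase j.1, by
              obtain ⟨hcard, hle, hmem⟩ := F.2
              have hj : j.1 ∈ F.1 := j.2
              have herase : expF (F.1.erase j.1) + Finsupp.single j.1 1 = expF F.1 := by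
                simpa [expF] using Finset.sum_erase_add F.1 (fun k => Finsupp.single k (1:ℕ)) hj
              refine ⟨by simp [Finset.card_erase_of_mem hj, hcard], ?_, ?_⟩
              · refine le_trans ?_ hle
                rw [← herase]; exact le_add_of_nonneg_right bot_le
              · have h1 : Finsupp.single j.1 1 ≤ expF F.1 := by
                  rw [← herase]; exact le_add_of_nonneg_left bot_le
                have key : a - expF (F.1.erase j.1) =
                    (a - expF F.1) + Finsupp.single j.1 1 := by
                  have : expF (F.1.erase j.1) = expF F.1 - Finsupp.single j.1 1 := by
                    rw [← herase]; simp
                  rw [this, tsub_tsub_assoc hle h1]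
                rw [key]
                have : (monomial ((a - expF F.1) + Finsupp.single j.1 1) (1:K) : S K n)
                    = (monomial (a - expF F.1) (1:K)) * (monomial (Finsupp.single j.1 1) (1:K)) := by
                  rw [monomial_mul, mul_one]
                rw [this]
                exact Ideal.mul_mem_right _ _ hmem⟩ : KB I a i) (1 : K))

/-- The outgoing Koszul differential from homological degree `i`
(the zero map when `i = 0`). -/
def kdOut (I : Ideal (S K n)) (a : Fin n →₀ ℕ) :
    (i : ℕ) → (KB I a i →₀ K) →ₗ[K] (KB I a (i - 1) →₀ K)
  | 0 => 0
  | (i + 1) => kd I a i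

/-- The multidegree-`a` component of `Tor_i^S(K, I)`, computed as the `i`-th
homology of the multidegree-`a` strand of the Koszul complex tensored
with `I`. -/
abbrev Hmod (I : Ideal (S K n)) (a : Fin n →₀ ℕ) (i : ℕ) :=
  ↥(Submodule.map (Submodule.mkQ (LinearMap.range (kd I a i)))
      (LinearMap.ker (kdOut I a i)))

/-- The `i`-th homological shift ideal `HS_i(I)`, generated by the monomials
`x^a` with `Tor_i^S(K, I)_a ≠ 0`. -/
def HSIdeal (i : ℕ) (I : Ideal (S K n)) : Ideal (S K n) :=
  Ideal.span {p | ∃ a : Fin n →₀ ℕ, Nontrivial (Hmod I a i) ∧ p = monomial a 1}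

/-- `I` is a monomial ideal. -/
def IsMonomialIdeal (I : Ideal (S K n)) : Prop :=
  ∃ A : Set (Fin n →₀ ℕ), I = Ideal.span ((fun a => (monomial a 1 : S K n)) '' A)

/-- `I` has a `d`-linear resolution: `Tor_i^S(K,I)_j = 0` whenever `j ≠ i + d`. -/
def LinearRes (d : ℕ) (I : Ideal (S K n)) : Prop :=
  ∀ (i : ℕ) (a : Fin n →₀ ℕ), (a.sum fun _ e => e) ≠ i + d → Subsingleton (Hmod I a i)

/-- The projective dimension of (a finitely generated multigraded module such
as) `I` over `S`: the largest `i` with `Tor_i^S(K, I) ≠ 0`. -/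
def pdim (I : Ideal (S K n)) : ℕ :=
  sSup {i | ∃ a, Nontrivial (Hmod I a i)}

variable (K n)

/-- The graded maximal ideal `𝔪 = (x_1, …, x_n)`. -/
def maxIdl : Ideal (S K n) := Ideal.span (Set.range X)

/-- The `i`-th squarefree power `𝔪^{[i]} = (x_F : F ⊆ [n], |F| = i)`. -/
def sqPow (i : ℕ) : Ideal (S K n) :=
  Ideal.span {p | ∃ F : Finset (Fin n), F.card = i ∧ p = monomial (expF F) 1}

/-- The exponent vector of `α = x_1⋯x_n`. -/
def aexp : Fin n →₀ ℕ := expF (Finset.univ : Finset (Fin n))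

/-- The edge ideal `I(G)` of a graph `G` on `[n]`. -/
def edgeIdeal (G : SimpleGraph (Fin n)) : Ideal (S K n) :=
  Ideal.span {p | ∃ i j, G.Adj i j ∧ p = X i * X j}

/-- The complementary edge ideal `I_c(G)` of a graph `G` on `[n]`. -/
def compIdeal (G : SimpleGraph (Fin n)) : Ideal (S K n) :=
  Ideal.span {p | ∃ i j, G.Adj i j ∧
    p = monomial (aexp n - Finsupp.single i 1 - Finsupp.single j 1) 1}


variable {K} {n}

end

section Proof

variable {K : Type} [Field K] {n : ℕ}

/-! ### The full Koszul complex -/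

/-- The simplicial boundary map on the free module on all subsets of `[n]`; every `kd I a i` is a
restriction of it. -/
noncomputable def bd (K : Type) [Field K] (n : ℕ) :
    (Finset (Fin n) →₀ K) →ₗ[K] (Finset (Fin n) →₀ K) :=
  Finsupp.lsum K fun F => LinearMap.toSpanSingleton K _
    (∑ j ∈ F, ((-1 : K) ^ ((F.filter (fun x => x < j)).card)) • Finsupp.single (F.erase j) (1 : K))

/-- The cone operator with apex `j`: it sends `F` to `± F ∪ {j}` if `j ∉ F`, and to `0` otherwise. -/
noncomputable def cone (K : Type) [Field K] {n : ℕ} (j : Fin n) :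
    (Finset (Fin n) →₀ K) →ₗ[K] (Finset (Fin n) →₀ K) :=
  Finsupp.lsum K fun F => LinearMap.toSpanSingleton K _
    (if j ∈ F then 0 else
      ((-1 : K) ^ ((F.filter (fun x => x < j)).card)) • Finsupp.single (insert j F) (1 : K))

/-- The inclusion of a term of a strand into the free module on all subsets of `[n]`. -/
noncomputable def incl (I : Ideal (S K n)) (a : Fin n →₀ ℕ) (i : ℕ) :
    (KB I a i →₀ K) →ₗ[K] (Finset (Fin n) →₀ K) :=
  Finsupp.lmapDomain K K Subtype.val

lemma bd_single (F : Finset (Fin n)) : bd K n (Finsupp.single F 1) =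
    ∑ j ∈ F, ((-1 : K) ^ ((F.filter (fun x => x < j)).card)) •
      Finsupp.single (F.erase j) (1 : K) := by
  simp [bd]

lemma cone_single (j : Fin n) (F : Finset (Fin n)) : cone K j (Finsupp.single F 1) =
    if j ∈ F then 0 else
      ((-1 : K) ^ ((F.filter (fun x => x < j)).card)) • Finsupp.single (insert j F) (1 : K) := by
  simp [cone]

lemma incl_single (I : Ideal (S K n)) (a : Fin n →₀ ℕ) (i : ℕ) (F : KB I a i) (c : K) :
    incl I a i (Finsupp.single F c) = Finsupp.single F.1 c := by
  simp [incl]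

lemma incl_injective (I : Ideal (S K n)) (a : Fin n →₀ ℕ) (i : ℕ) :
    Function.Injective (incl I a i) :=
  Finsupp.mapDomain_injective Subtype.val_injective

lemma incl_kd (I : Ideal (S K n)) (a : Fin n →₀ ℕ) (i : ℕ) (x : KB I a (i + 1) →₀ K) :
    incl I a i (kd I a i x) = bd K n (incl I a (i + 1) x) := by
  suffices h : incl I a i ∘ₗ kd I a i = bd K n ∘ₗ incl I a (i + 1) from LinearMap.congr_fun h x
  ext1 F
  ext1
  simp only [LinearMap.coe_comp, Function.comp_apply, Finsupp.lsingle_apply, incl_single]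
  rw [bd_single, ← Finset.sum_attach]
  simp [kd, incl_single, map_sum]

/-- The cone operator is a contracting homotopy of the full complex. -/
lemma bd_cone_add_cone_bd (j : Fin n) (x : Finset (Fin n) →₀ K) :
    bd K n (cone K j x) + cone K j (bd K n x) = x := by
  suffices h : bd K n ∘ₗ cone K j + cone K j ∘ₗ bd K n = LinearMap.id from LinearMap.congr_fun h x
  ext1 F
  ext1
  simp only [LinearMap.coe_comp, Function.comp_apply, Finsupp.lsingle_apply, LinearMap.add_apply,
    LinearMap.id_apply]
  rw [bd_single, cone_single, map_sum]
  by_cases hj : j ∈ F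
  · rw [if_pos hj, map_zero, zero_add, Finset.sum_eq_single j]
    · rw [map_smul, cone_single, if_neg (by simp), Finset.insert_erase hj, smul_smul, ← pow_add]
      have : (F.erase j).filter (fun x => x < j) = F.filter (fun x => x < j) := by
        ext l; simp only [Finset.mem_filter, Finset.mem_erase]
        exact ⟨fun h => ⟨h.1.2, h.2⟩, fun h => ⟨⟨h.2.ne, h.1⟩, h.2⟩⟩
      rw [this, Even.neg_one_pow ⟨_, rfl⟩, one_smul]
    · intro l _ hlj
      rw [map_smul, cone_single, if_pos (by simp [hj, hlj.symm]), smul_zero]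
    · intro h; exact absurd hj h
  · rw [if_neg hj, map_smul, bd_single, Finset.sum_insert hj, Finset.erase_insert hj, smul_add,
      smul_smul, ← pow_add]
    have h1 : (insert j F).filter (fun x => x < j) = F.filter (fun x => x < j) := by
      rw [Finset.filter_insert, if_neg (lt_irrefl j)]
    rw [h1, Even.neg_one_pow ⟨_, rfl⟩, one_smul, add_assoc, Finset.smul_sum,
      ← Finset.sum_add_distrib]
    conv_rhs => rw [← add_zero (Finsupp.single F (1 : K))]
    congr 1
    refine Finset.sum_eq_zero fun l hl => ?_
    have hlj : l ≠ j := by rintro rfl; exact hj hl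
    rw [map_smul, cone_single, if_neg (by simp [hj]), Finset.erase_insert_of_ne hlj.symm,
      smul_smul, smul_smul, ← pow_add, ← pow_add, ← add_smul]
    -- Removing `l` and inserting `j` in either order gives opposite signs.
    suffices h : ((-1 : K) ^ ((F.filter (fun x => x < j)).card +
        ((insert j F).filter (fun x => x < l)).card)) +
        (-1 : K) ^ ((F.filter (fun x => x < l)).card +
        ((F.erase l).filter (fun x => x < j)).card) = 0 by rw [h, zero_smul]
    rcases lt_or_gt_of_ne hlj with h | h
    · have e1 : ((insert j F).filter (fun x => x < l)) = F.filter (fun x => x < l) := by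
        rw [Finset.filter_insert, if_neg h.not_gt]
      have e2 : ((F.filter (fun x => x < j)).card) =
          ((F.erase l).filter (fun x => x < j)).card + 1 := by
        rw [Finset.filter_erase, Finset.card_erase_add_one (by simp [hl, h])]
      rw [e1, e2]; ring
    · have e1 : ((insert j F).filter (fun x => x < l)).card =
          (F.filter (fun x => x < l)).card + 1 := by
        rw [Finset.filter_insert, if_pos h, Finset.card_insert_of_notMem (by simp [hj])]
      have e2 : ((F.erase l).filter (fun x => x < j)) = F.filter (fun x => x < j) := by
        rw [Finset.filter_erase, Finset.erase_eq_of_notMem (by simp [h.le])]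
      rw [e1, e2]; ring

lemma bd_singleton (u : Fin n) :
    bd K n (Finsupp.single {u} 1) = Finsupp.single ∅ 1 := by
  rw [bd_single]; simp [Finset.filter_singleton]

lemma bd_pair {u v : Fin n} (h : u < v) :
    bd K n (Finsupp.single {u, v} 1) = Finsupp.single {v} 1 - Finsupp.single {u} 1 := by
  have e1 : ({u, v} : Finset (Fin n)).erase u = {v} := by
    ext l; simp only [Finset.mem_erase, Finset.mem_insert, Finset.mem_singleton]; grind
  have e2 : ({u, v} : Finset (Fin n)).erase v = {u} := by
    ext l; simp only [Finset.mem_erase, Finset.mem_insert, Finset.mem_singleton]; grind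
  rw [bd_single, Finset.sum_pair h.ne, e1, e2]
  simp [Finset.filter_insert, Finset.filter_singleton, h, h.not_gt, sub_eq_add_neg]

/-! ### Strands of the Koszul complex of `I_c(G)` -/

lemma nontrivial_Hmod_iff (I : Ideal (S K n)) (a : Fin n →₀ ℕ) (i : ℕ) :
    Nontrivial (Hmod I a i) ↔ ¬ LinearMap.ker (kdOut I a i) ≤ LinearMap.range (kd I a i) := by
  rw [Submodule.nontrivial_iff_ne_bot, ne_eq, ← LinearMap.le_ker_iff_map, Submodule.ker_mkQ]

lemma expF_apply (F : Finset (Fin n)) (l : Fin n) : expF F l = if l ∈ F then 1 else 0 := by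
  simp [expF, Finsupp.finsetSum_apply, Finsupp.single_apply]

lemma aexp_apply (l : Fin n) : aexp n l = 1 := by
  simp [aexp, expF_apply]

lemma monomial_mem_compIdeal (G : SimpleGraph (Fin n)) (b : Fin n →₀ ℕ) :
    (monomial b (1 : K) : S K n) ∈ compIdeal K n G ↔
      ∃ u v, G.Adj u v ∧ ∀ l, b l = 0 → l = u ∨ l = v := by
  have h : {p : S K n | ∃ i j, G.Adj i j ∧
      p = monomial (aexp n - Finsupp.single i 1 - Finsupp.single j 1) 1} =
      (fun s => monomial s (1 : K)) ''
        {s | ∃ i j, G.Adj i j ∧ s = aexp n - Finsupp.single i 1 - Finsupp.single j 1} := by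
    ext p; constructor
    · rintro ⟨i, j, h, rfl⟩; exact ⟨_, ⟨i, j, h, rfl⟩, rfl⟩
    · rintro ⟨_, ⟨i, j, h, rfl⟩, rfl⟩; exact ⟨i, j, h, rfl⟩
  rw [compIdeal, h, mem_ideal_span_monomial_image]
  have key : ∀ u v : Fin n, aexp n - Finsupp.single u 1 - Finsupp.single v 1 ≤ b ↔
      ∀ l, b l = 0 → l = u ∨ l = v := by
    intro u v
    rw [Finsupp.le_def]
    refine forall_congr' fun l => ?_
    simp only [Finsupp.tsub_apply, aexp_apply, Finsupp.single_apply]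
    grind
  constructor
  · intro h
    obtain ⟨_, ⟨u, v, huv, rfl⟩, hle⟩ := h b (by simp [mem_support_iff, coeff_monomial])
    exact ⟨u, v, huv, (key u v).1 hle⟩
  · rintro ⟨u, v, huv, hb⟩ xi hxi
    have : xi = b := by
      by_contra hne
      simp [mem_support_iff, coeff_monomial, Ne.symm hne] at hxi
    subst this
    exact ⟨_, ⟨u, v, huv, rfl⟩, (key u v).2 hb⟩

lemma expF_le_iff (F : Finset (Fin n)) (a : Fin n →₀ ℕ) :
    expF F ≤ a ↔ ∀ l ∈ F, a l ≠ 0 := by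
  rw [Finsupp.le_def]
  refine forall_congr' fun l => ?_
  rw [expF_apply]; grind

/-- The basis condition of a strand in combinatorial form. -/
lemma mem_KB_iff (G : SimpleGraph (Fin n)) (a : Fin n →₀ ℕ) (i : ℕ) (F : Finset (Fin n)) :
    (F.card = i ∧ expF F ≤ a ∧
      (monomial (a - expF F) (1 : K) : S K n) ∈ compIdeal K n G) ↔
    (F.card = i ∧ (∀ l ∈ F, a l ≠ 0) ∧ ∃ u v, G.Adj u v ∧
      ∀ l, (a l = 0 ∨ (l ∈ F ∧ a l = 1)) → l = u ∨ l = v) := by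
  rw [expF_le_iff, monomial_mem_compIdeal]
  refine and_congr_right fun _ => and_congr_right fun hF => ?_
  refine exists_congr fun u => exists_congr fun v => and_congr_right fun _ =>
    forall_congr' fun l => ?_
  rw [Finsupp.tsub_apply, expF_apply]
  have := hF l
  grind

/-- A strand whose degree has an entry `≥ 2` is exact in positive homological degrees. -/
lemma ker_le_range_of_two_le (G : SimpleGraph (Fin n)) (a : Fin n →₀ ℕ) (i : ℕ) (j : Fin n)
    (hj : 2 ≤ a j) : LinearMap.ker (kd (compIdeal K n G) a i) ≤
      LinearMap.range (kd (compIdeal K n G) a (i + 1)) := by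
  classical
  set I := compIdeal K n G
  have hins : ∀ F : KB I a (i + 1), j ∉ F.1 → ((insert j F.1).card = i + 1 + 1 ∧
      expF (insert j F.1) ≤ a ∧ (monomial (a - expF (insert j F.1)) (1 : K) : S K n) ∈ I) := by
    intro F hF
    have h := F.2
    rw [mem_KB_iff] at h ⊢
    obtain ⟨h1, h2, u, v, huv, h3⟩ := h
    refine ⟨by rw [Finset.card_insert_of_notMem hF, h1], ?_, u, v, huv, ?_⟩
    · intro l hl
      rcases Finset.mem_insert.1 hl with rfl | hl
      · omega
      · exact h2 l hl
    · intro l hl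
      refine h3 l (hl.imp_right fun ⟨h4, h5⟩ => ⟨?_, h5⟩)
      rcases Finset.mem_insert.1 h4 with rfl | h4
      · omega
      · exact h4
  -- The cone operator restricts to the strand.
  let h : (KB I a (i + 1) →₀ K) →ₗ[K] (KB I a (i + 1 + 1) →₀ K) :=
    Finsupp.lsum K fun F => LinearMap.toSpanSingleton K _
      (if hF : j ∈ F.1 then 0 else
        ((-1 : K) ^ ((F.1.filter (fun x => x < j)).card)) •
          Finsupp.single (⟨insert j F.1, hins F hF⟩ : KB I a (i + 1 + 1)) (1 : K))
  have hincl : ∀ x, incl I a (i + 1 + 1) (h x) = cone K j (incl I a (i + 1) x) := by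
    intro x
    suffices e : incl I a (i + 1 + 1) ∘ₗ h = cone K j ∘ₗ incl I a (i + 1) from
      LinearMap.congr_fun e x
    ext1 F
    ext1
    simp only [LinearMap.coe_comp, Function.comp_apply, Finsupp.lsingle_apply, incl_single]
    rw [cone_single]
    by_cases hF : j ∈ F.1
    · simp [h, hF]
    · simp [h, hF, incl_single]
  intro x hx
  rw [LinearMap.mem_ker] at hx
  refine ⟨h x, incl_injective I a (i + 1) ?_⟩
  have e := bd_cone_add_cone_bd j (incl I a (i + 1) x)
  rw [← incl_kd, hx, map_zero, map_zero, add_zero] at e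
  rw [incl_kd, hincl, e]

/-- In a squarefree degree, a basis element `F` together with any zeros `Z` of the degree has at
most two elements, since it is contained in an edge. -/
lemma card_le_of_le_one (G : SimpleGraph (Fin n)) (a : Fin n →₀ ℕ) (ha : ∀ l, a l ≤ 1) (i : ℕ)
    (F : KB (compIdeal K n G) a i) (Z : Finset (Fin n)) (hZ : ∀ z ∈ Z, a z = 0) :
    i + Z.card ≤ 2 := by
  have h := F.2
  rw [mem_KB_iff] at h
  obtain ⟨h1, h2, u, v, huv, h3⟩ := h
  have hd : Disjoint F.1 Z := Finset.disjoint_left.2 fun l hl hl' => h2 l hl (hZ l hl')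
  have hs : F.1 ∪ Z ⊆ {u, v} := by
    intro l hl
    rw [Finset.mem_insert, Finset.mem_singleton]
    rcases Finset.mem_union.1 hl with hl | hl
    · exact h3 l (Or.inr ⟨hl, by have := ha l; have := h2 l hl; omega⟩)
    · exact h3 l (Or.inl (hZ l hl))
  have := Finset.card_le_card hs
  rw [Finset.card_union_of_disjoint hd, h1] at this
  exact this.trans Finset.card_le_two

lemma ker_le_range_of_isEmpty (I : Ideal (S K n)) (a : Fin n →₀ ℕ) (i : ℕ)
    (h : IsEmpty (KB I a i)) : LinearMap.ker (kdOut I a i) ≤ LinearMap.range (kd I a i) := by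
  intro x _
  rw [Subsingleton.elim x 0]
  exact Submodule.zero_mem _

lemma not_nontrivial_Hmod_of_three_le (G : SimpleGraph (Fin n)) (a : Fin n →₀ ℕ) (i : ℕ)
    (hi : 3 ≤ i) : ¬ Nontrivial (Hmod (compIdeal K n G) a i) := by
  rw [nontrivial_Hmod_iff, not_not]
  by_cases ha : ∀ l, a l ≤ 1
  · refine ker_le_range_of_isEmpty _ _ _ ⟨fun F => ?_⟩
    have := card_le_of_le_one G a ha i F ∅ (by simp)
    simp at this
    omega
  · push Not at ha
    obtain ⟨j, hj⟩ := ha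
    obtain ⟨k, rfl⟩ : ∃ k, i = k + 1 := ⟨i - 1, by omega⟩
    exact ker_le_range_of_two_le G a k j hj

lemma range_kd_eq_bot (G : SimpleGraph (Fin n)) (a : Fin n →₀ ℕ) (ha : ∀ l, a l ≤ 1) (i : ℕ)
    (Z : Finset (Fin n)) (hZ : ∀ z ∈ Z, a z = 0) (hi : 2 < i + 1 + Z.card) :
    LinearMap.range (kd (compIdeal K n G) a i) = ⊥ := by
  have : IsEmpty (KB (compIdeal K n G) a (i + 1)) :=
    ⟨fun F => absurd (card_le_of_le_one G a ha (i + 1) F Z hZ) (by omega)⟩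
  rw [eq_bot_iff]
  rintro _ ⟨x, rfl⟩
  rw [Subsingleton.elim x 0, map_zero]
  exact Submodule.zero_mem _

/-! ### Degree one -/

lemma exists_two_neighbors (hn : 3 ≤ n) (G : SimpleGraph (Fin n)) (hconn : G.Connected) :
    ∃ v u w, G.Adj v u ∧ G.Adj v w ∧ u ≠ w := by
  have : Nontrivial (Fin n) := Fin.nontrivial_iff_two_le.2 (by omega)
  by_contra! hcon
  let a : Fin n := ⟨0, by omega⟩
  obtain ⟨b, hab⟩ := hconn.preconnected.exists_adj_of_nontrivial a
  -- If no vertex has two neighbours, the edge `ab` is a connected component.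
  have hall : ∀ c, c = a ∨ c = b := by
    intro c
    obtain ⟨p⟩ := hconn.preconnected a c
    suffices H : ∀ x y, G.Walk x y → (x = a ∨ x = b) → (y = a ∨ y = b) from H a c p (Or.inl rfl)
    intro x y p
    induction p with
    | nil => exact id
    | cons h _ ih =>
      rintro (rfl | rfl)
      · exact ih (Or.inr (hcon _ _ _ h hab))
      · exact ih (Or.inl (hcon _ _ _ h hab.symm))
  have : (Finset.univ : Finset (Fin n)) ⊆ {a, b} := fun c _ => by simpa using hall c
  have := (Finset.card_le_card this).trans Finset.card_le_two
  simp at this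
  omega

lemma nontrivial_Hmod_one (hn : 3 ≤ n) (G : SimpleGraph (Fin n)) (hconn : G.Connected) :
    ∃ a, Nontrivial (Hmod (compIdeal K n G) a 1) := by
  obtain ⟨v, u, w, hu, hw, huw⟩ := exists_two_neighbors hn G hconn
  let a : Fin n →₀ ℕ := expF (Finset.univ.erase v)
  have ha : ∀ l, a l = if l = v then 0 else 1 := fun l => by
    simp only [a, expF_apply]; simp [ite_not]
  refine ⟨a, ?_⟩
  rw [nontrivial_Hmod_iff, range_kd_eq_bot G a (fun l => by rw [ha]; split_ifs <;> omega) 1 {v}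
    (by simp [ha]) (by simp), le_bot_iff]
  have hmem : ∀ t, G.Adj v t → (({t} : Finset (Fin n)).card = 1 ∧ expF {t} ≤ a ∧
      (monomial (a - expF {t}) (1 : K) : S K n) ∈ compIdeal K n G) := by
    intro t ht
    rw [mem_KB_iff]
    refine ⟨by simp, ?_, v, t, ht, ?_⟩
    · simp [ha, ht.ne']
    · intro l; simp only [ha, Finset.mem_singleton]; grind
  let Fu : KB (compIdeal K n G) a 1 := ⟨{u}, hmem u hu⟩
  let Fw : KB (compIdeal K n G) a 1 := ⟨{w}, hmem w hw⟩
  have hne : Fu ≠ Fw := by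
    intro h
    exact huw (Finset.singleton_injective (congrArg Subtype.val h))
  intro hbot
  have hker : (Finsupp.single Fu (1 : K) - Finsupp.single Fw 1) ∈
      LinearMap.ker (kdOut (compIdeal K n G) a 1) := by
    rw [LinearMap.mem_ker]
    refine incl_injective (compIdeal K n G) a 0 ?_
    change incl _ a 0 (kd _ a 0 _) = _
    rw [incl_kd, map_sub, map_sub, incl_single, incl_single, map_zero, bd_singleton, bd_singleton,
      sub_self]
  rw [hbot, Submodule.mem_bot, sub_eq_zero] at hker
  exact hne (Finsupp.single_left_injective one_ne_zero hker)

/-! ### Degree two -/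

lemma mem_KB_aexp_iff (G : SimpleGraph (Fin n)) (i : ℕ) (F : Finset (Fin n)) :
    (F.card = i ∧ expF F ≤ aexp n ∧
      (monomial (aexp n - expF F) (1 : K) : S K n) ∈ compIdeal K n G) ↔
    (F.card = i ∧ ∃ u v, G.Adj u v ∧ F ⊆ {u, v}) := by
  rw [mem_KB_iff]
  simp [aexp_apply, Finset.subset_iff]

lemma card_KB_two (G : SimpleGraph (Fin n)) :
    Nat.card (KB (compIdeal K n G) (aexp n) 2) = Nat.card G.edgeSet := by
  symm
  have hmem : ∀ e : G.edgeSet, e.1.toFinset.card = 2 ∧ expF e.1.toFinset ≤ aexp n ∧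
      (monomial (aexp n - expF e.1.toFinset) (1 : K) : S K n) ∈ compIdeal K n G := by
    rintro ⟨e, he⟩
    rw [mem_KB_aexp_iff]
    refine ⟨Sym2.card_toFinset_of_not_isDiag e (G.not_isDiag_of_mem_edgeSet he), ?_⟩
    induction e with
    | _ u v => exact ⟨u, v, he, fun l hl => by simpa using hl⟩
  refine Nat.card_congr (Equiv.ofBijective
    (fun e : G.edgeSet => (⟨e.1.toFinset, hmem e⟩ : KB (compIdeal K n G) (aexp n) 2)) ⟨?_, ?_⟩)
  · intro e e' h
    have h' : e.1.toFinset = e'.1.toFinset := congrArg Subtype.val h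
    refine Subtype.ext (Sym2.ext fun l => ?_)
    rw [← Sym2.mem_toFinset, ← Sym2.mem_toFinset, h']
  · rintro ⟨F, hF⟩
    obtain ⟨h1, u, v, huv, h2⟩ := (mem_KB_aexp_iff G 2 F).1 hF
    refine ⟨⟨s(u, v), huv⟩, Subtype.ext ?_⟩
    have : F = {u, v} := Finset.eq_of_subset_of_card_le h2 (by rw [h1]; exact Finset.card_le_two)
    subst this
    ext l; simp

lemma singleton_mem_KB (hn : 3 ≤ n) (G : SimpleGraph (Fin n)) (hconn : G.Connected) (v : Fin n) :
    ({v} : Finset (Fin n)).card = 1 ∧ expF {v} ≤ aexp n ∧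
      (monomial (aexp n - expF {v}) (1 : K) : S K n) ∈ compIdeal K n G := by
  have : Nontrivial (Fin n) := Fin.nontrivial_iff_two_le.2 (by omega)
  obtain ⟨w, hw⟩ := hconn.preconnected.exists_adj_of_nontrivial v
  rw [mem_KB_aexp_iff]
  exact ⟨by simp, v, w, hw, by simp⟩

lemma card_KB_one (hn : 3 ≤ n) (G : SimpleGraph (Fin n)) (hconn : G.Connected) :
    Nat.card (KB (compIdeal K n G) (aexp n) 1) = n := by
  have : Nat.card (Fin n) = Nat.card (KB (compIdeal K n G) (aexp n) 1) :=
    Nat.card_congr (Equiv.ofBijective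
      (fun v => (⟨{v}, singleton_mem_KB hn G hconn v⟩ : KB (compIdeal K n G) (aexp n) 1))
      ⟨fun v w h => Finset.singleton_injective (congrArg Subtype.val h), fun F => by
        obtain ⟨v, hv⟩ := Finset.card_eq_one.1 F.2.1
        exact ⟨v, Subtype.ext hv.symm⟩⟩)
  rw [← this, Nat.card_fin]

/-- The boundary map from edges to vertices of a connected graph has corank one. -/
lemma finrank_range_kd_one (hn : 3 ≤ n) (G : SimpleGraph (Fin n)) (hconn : G.Connected) :
    Module.finrank K (LinearMap.range (kd (compIdeal K n G) (aexp n) 1)) + 1 = n := by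
  set I := compIdeal K n G with hI
  let vt : Fin n → (KB I (aexp n) 1 →₀ K) :=
    fun v => Finsupp.single ⟨{v}, singleton_mem_KB hn G hconn v⟩ 1
  have hvt : ∀ v, incl I (aexp n) 1 (vt v) = Finsupp.single {v} 1 := fun v => incl_single _ _ _ _ _
  have hfin : Module.finrank K (KB I (aexp n) 1 →₀ K) = n := by
    have := Fintype.ofFinite (KB I (aexp n) 1)
    rw [Module.finrank_finsupp_self, ← Nat.card_eq_fintype_card, hI, card_KB_one hn G hconn]
  let v₀ : Fin n := ⟨0, by omega⟩
  set R := LinearMap.range (kd I (aexp n) 1)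
  -- The sum of coefficients vanishes on boundaries of edges.
  have hlt : Module.finrank K R < n := by
    refine (Submodule.finrank_lt fun htop => ?_).trans_eq hfin
    let ε : (Finset (Fin n) →₀ K) →ₗ[K] K := Finsupp.linearCombination K (fun _ => (1 : K))
    have hzero : ε ∘ₗ bd K n ∘ₗ incl I (aexp n) 2 = 0 := by
      ext1 F
      ext1
      simp only [LinearMap.coe_comp, Function.comp_apply, Finsupp.lsingle_apply, incl_single,
        LinearMap.zero_apply]
      obtain ⟨u, v, huv, hF⟩ := Finset.card_eq_two.1 F.2.1
      rw [hF]
      rcases lt_or_gt_of_ne huv with h | h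
      · rw [bd_pair h]; simp [ε]
      · rw [Finset.pair_comm, bd_pair h]; simp [ε]
    have hv : vt v₀ ∈ R := htop ▸ Submodule.mem_top
    obtain ⟨x, hx⟩ := hv
    have h1 := LinearMap.congr_fun hzero x
    simp only [LinearMap.coe_comp, Function.comp_apply, LinearMap.zero_apply] at h1
    rw [← incl_kd, hx, hvt] at h1
    simp [ε] at h1
  -- Modulo boundaries, all vertices of a connected graph agree.
  have hadj : ∀ u v, G.Adj u v → vt v - vt u ∈ R := by
    have hlt' : ∀ u v, G.Adj u v → u < v → vt v - vt u ∈ R := by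
      intro u v huv h
      have hmem : ({u, v} : Finset (Fin n)).card = 2 ∧ expF {u, v} ≤ aexp n ∧
          (monomial (aexp n - expF {u, v}) (1 : K) : S K n) ∈ I := by
        rw [mem_KB_aexp_iff]
        exact ⟨Finset.card_pair h.ne, u, v, huv, subset_rfl⟩
      refine ⟨Finsupp.single ⟨{u, v}, hmem⟩ 1, incl_injective I (aexp n) 1 ?_⟩
      rw [incl_kd, incl_single, bd_pair h, map_sub, hvt, hvt]
    intro u v huv
    rcases lt_or_gt_of_ne huv.ne with h | h
    · exact hlt' u v huv h
    · rw [← neg_sub]; exact R.neg_mem (hlt' v u huv.symm h)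
  have hreach : ∀ u v, vt v - vt u ∈ R := by
    intro u v
    obtain ⟨p⟩ := hconn.preconnected u v
    induction p with
    | nil => simp
    | cons h _ ih =>
      have := R.add_mem ih (hadj _ _ h)
      rwa [sub_add_sub_cancel] at this
  have hsup : R ⊔ Submodule.span K {vt v₀} = ⊤ := by
    rw [eq_top_iff]
    rintro x -
    induction x using Finsupp.induction_linear with
    | zero => exact Submodule.zero_mem _
    | add f g hf hg => exact Submodule.add_mem _ hf hg
    | single F c =>
      obtain ⟨v, hv⟩ := Finset.card_eq_one.1 F.2.1
      have hF : Finsupp.single F c = c • vt v := by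
        rw [Finsupp.smul_single, smul_eq_mul, mul_one]
        congr 1
        exact Subtype.ext hv
      rw [hF]
      refine Submodule.smul_mem _ _ ?_
      rw [← sub_add_cancel (vt v) (vt v₀)]
      exact Submodule.add_mem_sup (hreach v₀ v) (Submodule.mem_span_singleton_self _)
  have h1 := Submodule.finrank_add_le_finrank_add_finrank R (Submodule.span K {vt v₀})
  rw [hsup, finrank_top, hfin] at h1
  have h2 : Module.finrank K (Submodule.span K {vt v₀}) ≤ 1 := by
    simpa using finrank_span_le_card (R := K) ({vt v₀} : Set (KB I (aexp n) 1 →₀ K))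
  omega

lemma ker_eq_bot_iff_isTree (hn : 3 ≤ n) (G : SimpleGraph (Fin n)) (hconn : G.Connected) :
    LinearMap.ker (kd (compIdeal K n G) (aexp n) 1) = ⊥ ↔ G.IsTree := by
  have h1 := finrank_range_kd_one (K := K) hn G hconn
  have h2 := LinearMap.finrank_range_add_finrank_ker (kd (compIdeal K n G) (aexp n) 1)
  have h3 : Module.finrank K (KB (compIdeal K n G) (aexp n) (1 + 1) →₀ K) =
      Nat.card G.edgeSet := by
    have := Fintype.ofFinite (KB (compIdeal K n G) (aexp n) 2)
    rw [Module.finrank_finsupp_self, ← Nat.card_eq_fintype_card, card_KB_two]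
  rw [SimpleGraph.isTree_iff_connected_and_card, and_iff_right hconn, ← Submodule.finrank_eq_zero,
    Nat.card_fin]
  omega

lemma exists_nontrivial_Hmod_two_iff (hn : 3 ≤ n) (G : SimpleGraph (Fin n))
    (hconn : G.Connected) :
    (∃ a, Nontrivial (Hmod (compIdeal K n G) a 2)) ↔ ¬ G.IsTree := by
  rw [← ker_eq_bot_iff_isTree (K := K) hn G hconn]
  constructor
  · rintro ⟨a, ha⟩ hker
    rw [nontrivial_Hmod_iff] at ha
    refine ha ?_
    by_cases hle : ∀ l, a l ≤ 1
    · by_cases hz : ∃ z, a z = 0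
      · obtain ⟨z, hz⟩ := hz
        refine ker_le_range_of_isEmpty _ _ _ ⟨fun F => ?_⟩
        have := card_le_of_le_one G a hle 2 F {z} (by simp [hz])
        simp at this
      · have : a = aexp n := by
          push Not at hz
          ext l
          rw [aexp_apply]
          have := hle l
          have := hz l
          omega
        subst this
        exact hker.le.trans bot_le
    · push Not at hle
      obtain ⟨j, hj⟩ := hle
      exact ker_le_range_of_two_le G a 1 j hj
  · intro hker
    refine ⟨aexp n, ?_⟩
    rw [nontrivial_Hmod_iff, range_kd_eq_bot G (aexp n) (fun l => (aexp_apply l).le) 2 ∅ (by simp)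
      (by simp), le_bot_iff]
    exact hker

end Proof

/-- For a connected graph `G` on `[n]` (`n ≥ 3`),
`pd(I_c(G)) ∈ {1, 2}`, with `pd(I_c(G)) = 1` iff `G` is a tree. -/
theorem pdim_compIdeal_one_or_two
    (K : Type) [Field K] (n : ℕ) (hn : 3 ≤ n) (G : SimpleGraph (Fin n))
    (hconn : G.Connected) :
    (pdim (compIdeal K n G) = 1 ∨ pdim (compIdeal K n G) = 2) ∧
    (pdim (compIdeal K n G) = 1 ↔ G.IsTree) := by
  have h1 := nontrivial_Hmod_one (K := K) hn G hconn
  have h2 := exists_nontrivial_Hmod_two_iff (K := K) hn G hconn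
  have hle : ∀ i ∈ {i | ∃ a, Nontrivial (Hmod (compIdeal K n G) a i)}, i ≤ 2 := by
    rintro i ⟨a, ha⟩
    by_contra hi
    exact not_nontrivial_Hmod_of_three_le G a i (by omega) ha
  by_cases ht : G.IsTree
  · have hp : pdim (compIdeal K n G) = 1 := by
      refine IsGreatest.csSup_eq ⟨h1, fun i hi => ?_⟩
      have := hle i hi
      have : i ≠ 2 := by
        rintro rfl
        exact h2.1 hi ht
      omega
    simp [hp, ht]
  · have hp : pdim (compIdeal K n G) = 2 :=
      IsGreatest.csSup_eq ⟨h2.2 ht, hle⟩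
    simp [hp, ht]

end Paper
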